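/- arXiv:2404.16889 — 6 statements merged into one kernel-verified Lean document; each statement's English description precedes it below -/
import Mathlib

section
/- Let R be a unital non-associative ring, σ : R → R an additive surjection with σ(1) = 1, and δ : R → R an additive map with δ(1) = 0. Then, for any n ∈ ℕ, the equality Σ_{i=0}^{n} X^i R = Σ_{i=0}^{n} R X^i holds as subsets (and hence as right R-modules) of the non-associative Ore extension R[X;σ,δ]. -/
/-!
The change of spanning family from `R Xⁱ` to `Xⁱ R` is upper triangular:
`Xᵐ s = Σ_{i ≤ m} π_i^m(s) Xⁱ`, with leading coefficient `π_m^m(s) = σ^m(s)`. Hence every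
`Xᵐ s` has degree at most `m`, which gives one inclusion. For the other, surjectivity of `σ`
makes `σ^m` surjective, so the leading term of a polynomial of degree at most `m` can be
cancelled by subtracting a suitable `Xᵐ s`, and one concludes by induction on the degree
bound (`exists_eq_sum_oreMul`).
-/

/-- `piMap σ δ m i` is the map `π_i^m`, the sum of all `(m choose i)` possible
compositions of `i` copies of `σ` and `m − i` copies of `δ`; it is `0` when `m < i`. -/
def piMap {R : Type*} [NonAssocRing R] (σ δ : R → R) : ℕ → ℕ → R → R
  | 0, 0 => id
  | 0, _ + 1 => fun _ => 0
  | m + 1, 0 => fun r => δ (piMap σ δ m 0 r)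
  | m + 1, i + 1 => fun r => σ (piMap σ δ m i r) + δ (piMap σ δ m (i + 1) r)

/-- The multiplication of the non-associative Ore extension `R[X;σ,δ]`, on the additive
group `ℕ →₀ R` of polynomials `Σ rᵢ Xⁱ`:
`(r X^m)(s X^n) = Σᵢ (r π_i^m(s)) X^{i+n}` (the terms with `i > m` vanish). -/
noncomputable def oreMul {R : Type*} [NonAssocRing R] (σ δ : R → R)
    (p q : ℕ →₀ R) : ℕ →₀ R :=
  p.sum fun m r => q.sum fun n s =>
    ∑ i ∈ Finset.range (m + 1), Finsupp.single (i + n) (r * piMap σ δ m i s)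

theorem piMap_eq_zero_of_lt {R : Type*} [NonAssocRing R] (σ δ : R → R)
    (hσ0 : σ 0 = 0) (hδ0 : δ 0 = 0) (m : ℕ) :
    ∀ (i : ℕ) (r : R), m < i → piMap σ δ m i r = 0 := by
  induction m with
  | zero =>
    intro i r h
    cases i with
    | zero => omega
    | succ i => simp [piMap]
  | succ m ih =>
    intro i r h
    cases i with
    | zero => omega
    | succ i => simp [piMap, ih i r (by omega), ih (i + 1) r (by omega), hσ0, hδ0]

theorem piMap_self {R : Type*} [NonAssocRing R] (σ δ : R → R)
    (hσ0 : σ 0 = 0) (hδ0 : δ 0 = 0) (m : ℕ) (r : R) :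
    piMap σ δ m m r = σ^[m] r := by
  induction m with
  | zero => simp [piMap]
  | succ m ih =>
    simp [piMap, ih, piMap_eq_zero_of_lt σ δ hσ0 hδ0 m (m + 1) r (by omega), hδ0,
      Function.iterate_succ_apply']

theorem piMap_zero_right {R : Type*} [NonAssocRing R] (σ δ : R → R)
    (hσ0 : σ 0 = 0) (hδ0 : δ 0 = 0) (m : ℕ) :
    ∀ i : ℕ, piMap σ δ m i 0 = 0 := by
  induction m with
  | zero => intro i; cases i <;> simp [piMap]
  | succ m ih => intro i; cases i <;> simp [piMap, ih, hσ0, hδ0]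

/-- The coefficients of `Xᵐ s` are the `π_k^m(s)`, including those with `k > m`, which are `0`. -/
theorem oreMul_X_pow_apply {R : Type*} [NonAssocRing R] (σ δ : R → R)
    (hσ0 : σ 0 = 0) (hδ0 : δ 0 = 0) (m : ℕ) (s : R) (k : ℕ) :
    oreMul σ δ (Finsupp.single m 1) (Finsupp.single 0 s) k = piMap σ δ m k s := by
  have h : oreMul σ δ (Finsupp.single m 1) (Finsupp.single 0 s) =
      ∑ i ∈ Finset.range (m + 1), Finsupp.single i (piMap σ δ m i s) := by
    unfold oreMul
    rw [Finsupp.sum_single_index (by simp), Finsupp.sum_single_index]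
    · simp
    · simp [piMap_zero_right σ δ hσ0 hδ0]
  rw [h, Finsupp.finsetSum_apply]
  simp only [Finsupp.single_apply, Finset.sum_ite_eq', Finset.mem_range]
  split_ifs with hk
  · rfl
  · exact (piMap_eq_zero_of_lt σ δ hσ0 hδ0 m k s (by omega)).symm

/-- A polynomial of degree less than `N` is a sum of terms `Xⁱ cᵢ`, `i < N`,
obtained by cancelling leading terms one after the other. -/
theorem exists_eq_sum_oreMul {R : Type*} [NonAssocRing R] (σ δ : R → R)
    (hσ0 : σ 0 = 0) (hδ0 : δ 0 = 0) (hσsurj : Function.Surjective σ) (N : ℕ) :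
    ∀ p : ℕ →₀ R, (∀ k, N ≤ k → p k = 0) → ∃ c : ℕ → R, p = ∑ i ∈ Finset.range N,
      oreMul σ δ (Finsupp.single i 1) (Finsupp.single 0 (c i)) := by
  induction N with
  | zero =>
    intro p hp
    exact ⟨0, by ext k; simp [hp k]⟩
  | succ N ih =>
    intro p hp
    obtain ⟨s, hs⟩ := hσsurj.iterate N (p N)
    obtain ⟨c, hc⟩ := ih (p - oreMul σ δ (Finsupp.single N 1) (Finsupp.single 0 s)) (by
      intro k hk
      rw [Finsupp.sub_apply, oreMul_X_pow_apply σ δ hσ0 hδ0]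
      rcases hk.eq_or_lt with rfl | hk
      · rw [piMap_self σ δ hσ0 hδ0, hs, sub_self]
      · rw [piMap_eq_zero_of_lt σ δ hσ0 hδ0 N k s hk, hp k hk, sub_self])
    refine ⟨Function.update c N s, ?_⟩
    rw [Finset.sum_range_succ, Function.update_self, ← sub_eq_iff_eq_add, hc]
    refine Finset.sum_congr rfl fun i hi => ?_
    rw [Function.update_of_ne (Finset.mem_range.mp hi).ne]

/-- In the non-associative Ore extension `R[X;σ,δ]` with `σ` an additive surjection
respecting `1` and `δ` an additive map with `δ 1 = 0`, for any `n ∈ ℕ` the equality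
`Σ_{i=0}^{n} Xⁱ R = Σ_{i=0}^{n} R Xⁱ` holds as subsets (here `Xⁱ r` denotes the product
`(1·Xⁱ)(r·X⁰)` in `R[X;σ,δ]` and `r Xⁱ` the monomial with coefficient `r`). -/
theorem ore_sum_XiR_eq_sum_RXi {R : Type*} [NonAssocRing R] (σ δ : R → R)
    (hσadd : ∀ a b : R, σ (a + b) = σ a + σ b) (hσsurj : Function.Surjective σ)
    (hσ1 : σ 1 = 1) (hδadd : ∀ a b : R, δ (a + b) = δ a + δ b) (hδ1 : δ 1 = 0)
    (n : ℕ) :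
    { p : ℕ →₀ R | ∃ c : ℕ → R, p = ∑ i ∈ Finset.range (n + 1),
        oreMul σ δ (Finsupp.single i 1) (Finsupp.single 0 (c i)) } =
    { p : ℕ →₀ R | ∃ c : ℕ → R, p = ∑ i ∈ Finset.range (n + 1),
        Finsupp.single i (c i) } := by
  have hσ0 : σ 0 = 0 := by simpa using hσadd 0 0
  have hδ0 : δ 0 = 0 := by simpa using hδadd 0 0
  ext p
  constructor
  · rintro ⟨c, hc⟩
    refine ⟨p, ?_⟩
    ext k
    simp only [Finsupp.finsetSum_apply, Finsupp.single_apply, Finset.sum_ite_eq',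
      Finset.mem_range]
    split_ifs with hk
    · rfl
    · rw [hc, Finsupp.finsetSum_apply]
      refine Finset.sum_eq_zero fun i hi => ?_
      have hi' := Finset.mem_range.mp hi
      rw [oreMul_X_pow_apply σ δ hσ0 hδ0, piMap_eq_zero_of_lt σ δ hσ0 hδ0 i k _ (by omega)]
  · rintro ⟨c, rfl⟩
    refine exists_eq_sum_oreMul σ δ hσ0 hδ0 hσsurj (n + 1) _ fun k hk => ?_
    simp only [Finsupp.finsetSum_apply, Finsupp.single_apply, Finset.sum_ite_eq',
      Finset.mem_range]
    rw [if_neg (by omega)]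
end

section
/- Let K be a field, R = K[Y,Z], U = {1,3,5,…} the set of positive odd integers, f : U → {1,2,3,…} a bijection, and g = (g_1,g_2) : {2,4,6,…} → U × ℕ a bijection. Define σ : R → R as the K-linear map determined on monomials by σ(1) = 1, σ(Y^i Z^j) = Y^{2i} Z^j for i > 0, σ(Z^j) = Z^{f(j)} for j odd, and σ(Z^j) = Y^{g_1(j)} Z^{g_2(j)} for j even, j > 0. Then σ is an additive bijection of R with σ(1) = 1, and σ maps the ideal J of R generated by Y into the ideal of R generated by Y². -/
open MvPolynomial

/-!
The map `σ` permutes the monomial basis of `K[Y,Z]`: on exponents it acts by `exponentMap`. The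
target exponents `(a, b)` split into four disjoint classes: the origin, `a > 0` even, `a = 0` with
`b > 0`, and `a` odd. These are the bijective images of the origin, of `i > 0`, of `i = 0` with
`j` odd, and of `i = 0` with `j > 0` even, respectively. Hence `exponentMap` is a bijection
(`exponentMap_bijective`), and `σ` is the linear automorphism that permutes the basis accordingly.
The ideal `(Y)` is spanned over `K` by the `Y^(i+1) Z^j`, and `σ` sends these to
`Y^(2i+2) Z^j ∈ (Y²)`.
-/

/-- The action of `σ` on exponents: `Y^i Z^j` is sent to `Y^a Z^b`, where
`(a, b) = exponentMap f g1 g2 (i, j)`. -/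
def exponentMap (f g1 g2 : ℕ → ℕ) (p : ℕ × ℕ) : ℕ × ℕ :=
  if 0 < p.1 then (2 * p.1, p.2)
  else if p.2 = 0 then (0, 0)
  else if Odd p.2 then (0, f p.2)
  else (g1 p.2, g2 p.2)

section

variable {f g1 g2 : ℕ → ℕ}

lemma exponentMap_pos {i : ℕ} (hi : 0 < i) (j : ℕ) :
    exponentMap f g1 g2 (i, j) = (2 * i, j) := by
  simp [exponentMap, hi]

lemma exponentMap_zero : exponentMap f g1 g2 (0, 0) = (0, 0) := by
  simp [exponentMap]

lemma exponentMap_odd {j : ℕ} (hj : Odd j) : exponentMap f g1 g2 (0, j) = (0, f j) := by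
  simp [exponentMap, hj, hj.pos.ne']

lemma exponentMap_even {j : ℕ} (hj : Even j) (h0 : 0 < j) :
    exponentMap f g1 g2 (0, j) = (g1 j, g2 j) := by
  simp [exponentMap, h0.ne', Nat.not_odd_iff_even.2 hj]

/-- The four classes of exponents on which `exponentMap` is given by a single formula. -/
lemma exponent_cases (p : ℕ × ℕ) :
    (∃ i j, 0 < i ∧ p = (i, j)) ∨ p = (0, 0) ∨ (∃ j, Odd j ∧ p = (0, j)) ∨
      ∃ j, Even j ∧ 0 < j ∧ p = (0, j) := by
  obtain ⟨i, j⟩ := p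
  rcases Nat.eq_zero_or_pos i with rfl | hi
  · rcases Nat.eq_zero_or_pos j with rfl | hj
    · simp
    · rcases Nat.even_or_odd j with h | h
      · exact .inr (.inr (.inr ⟨j, h, hj, rfl⟩))
      · exact .inr (.inr (.inl ⟨j, h, rfl⟩))
  · exact .inl ⟨i, j, hi, rfl⟩

lemma exponentMap_bijective
    (hf : Set.BijOn f { j : ℕ | Odd j } { j : ℕ | 0 < j })
    (hg : Set.BijOn (fun j => (g1 j, g2 j)) { j : ℕ | Even j ∧ 0 < j }
      ({ j : ℕ | Odd j } ×ˢ (Set.univ : Set ℕ))) :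
    Function.Bijective (exponentMap f g1 g2) := by
  have hf0 : ∀ j, Odd j → 0 < f j := fun j hj => hf.mapsTo hj
  have hg0 : ∀ j, Even j → 0 < j → Odd (g1 j) := fun j hj h0 => (hg.mapsTo ⟨hj, h0⟩).1
  constructor
  · intro p q h
    rcases exponent_cases p with ⟨i, j, hi, rfl⟩ | rfl | ⟨j, hj, rfl⟩ | ⟨j, hj, hj0, rfl⟩ <;>
    rcases exponent_cases q with ⟨i', j', hi', rfl⟩ | rfl | ⟨j', hj', rfl⟩ | ⟨j', hj', hj0', rfl⟩ <;>
    simp only [exponentMap_pos, exponentMap_zero, exponentMap_odd, exponentMap_even, *,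
      Prod.mk.injEq, true_and] at h ⊢
    case inr.inr.inl.inr.inr.inl => exact hf.injOn hj hj' h
    case inr.inr.inr.inr.inr.inr =>
      exact hg.injOn ⟨hj, hj0⟩ ⟨hj', hj0'⟩ (Prod.ext h.1 h.2)
    -- Images of different classes differ in the parity of `a`, or in whether `a` or `b` vanishes.
    all_goals grind
  · rintro ⟨a, b⟩
    rcases Nat.even_or_odd' a with ⟨c, rfl | rfl⟩
    · rcases Nat.eq_zero_or_pos c with rfl | hc
      · rcases Nat.eq_zero_or_pos b with rfl | hb
        · exact ⟨(0, 0), exponentMap_zero⟩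
        · obtain ⟨j, hj, rfl⟩ := hf.surjOn hb
          exact ⟨(0, j), exponentMap_odd hj⟩
      · exact ⟨(c, b), exponentMap_pos hc b⟩
    · obtain ⟨j, ⟨hj, hj0⟩, h⟩ := hg.surjOn (a := (2 * c + 1, b)) ⟨⟨c, rfl⟩, trivial⟩
      exact ⟨(0, j), (exponentMap_even hj hj0).trans h⟩

end

/-- The monomial basis of `K[Y,Z]`, indexed by the pairs of exponents of `Y = X 0` and
`Z = X 1`. -/
noncomputable def pairBasis (K : Type*) [Field K] :
    Module.Basis (ℕ × ℕ) K (MvPolynomial (Fin 2) K) :=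
  (basisMonomials (Fin 2) K).reindex
    (Finsupp.equivFunOnFinite.trans (finTwoArrowEquiv ℕ))

lemma pairBasis_apply (K : Type*) [Field K] (i j : ℕ) :
    pairBasis K (i, j) = X 0 ^ i * X 1 ^ j := by
  simp [pairBasis, monomial_eq, Finsupp.prod_fintype]

/-- Let `K` be a field, `R = K[Y,Z]` (with `Y = X 0`, `Z = X 1`), `f` a bijection from
the positive odd integers onto the positive integers, and `g = (g₁,g₂)` a bijection from
the positive even integers onto (odds) × ℕ. If `σ` is the `K`-linear map on `R`
determined on monomials by `σ 1 = 1`, `σ (YⁱZʲ) = Y^{2i}Zʲ` for `i > 0`,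
`σ (Zʲ) = Z^{f j}` for `j` odd, and `σ (Zʲ) = Y^{g₁ j} Z^{g₂ j}` for `j` even positive,
then `σ` is an additive bijection of `R` with `σ 1 = 1`, and `σ` maps the ideal
generated by `Y` into the ideal generated by `Y²`. -/
theorem sigma_bijective_and_maps_Y_into_Ysq {K : Type*} [Field K]
    (f g1 g2 : ℕ → ℕ)
    (hf : Set.BijOn f { j : ℕ | Odd j } { j : ℕ | 0 < j })
    (hg : Set.BijOn (fun j => (g1 j, g2 j)) { j : ℕ | Even j ∧ 0 < j }
      ({ j : ℕ | Odd j } ×ˢ (Set.univ : Set ℕ)))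
    (σ : MvPolynomial (Fin 2) K →ₗ[K] MvPolynomial (Fin 2) K)
    (h1 : σ 1 = 1)
    (h2 : ∀ i j : ℕ, 0 < i →
      σ (X 0 ^ i * X 1 ^ j) = X 0 ^ (2 * i) * X 1 ^ j)
    (h3 : ∀ j : ℕ, Odd j → σ (X 1 ^ j) = X 1 ^ f j)
    (h4 : ∀ j : ℕ, Even j → 0 < j →
      σ (X 1 ^ j) = X 0 ^ g1 j * X 1 ^ g2 j) :
    (∀ p q : MvPolynomial (Fin 2) K, σ (p + q) = σ p + σ q) ∧
    Function.Bijective σ ∧ σ 1 = 1 ∧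
    ∀ p ∈ Ideal.span {(X 0 : MvPolynomial (Fin 2) K)},
      σ p ∈ Ideal.span {(X 0 : MvPolynomial (Fin 2) K) ^ 2} := by
  have hb : ∀ p, σ (pairBasis K p) = pairBasis K (exponentMap f g1 g2 p) := by
    intro p
    rcases exponent_cases p with ⟨i, j, hi, rfl⟩ | rfl | ⟨j, hj, rfl⟩ | ⟨j, hj, hj0, rfl⟩
    · rw [exponentMap_pos hi, pairBasis_apply, pairBasis_apply, h2 i j hi]
    · simp [exponentMap_zero, pairBasis_apply, h1]
    · simp [exponentMap_odd hj, pairBasis_apply, h3 j hj]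
    · simp [exponentMap_even hj hj0, pairBasis_apply, h4 j hj hj0]
  refine ⟨map_add σ, ?_, h1, ?_⟩
  · have hσ : σ = ((pairBasis K).equiv (pairBasis K)
        (Equiv.ofBijective _ (exponentMap_bijective hf hg))).toLinearMap :=
      (pairBasis K).ext fun p => by simp [hb]
    rw [hσ]
    exact LinearEquiv.bijective _
  · intro p hp
    obtain ⟨q, rfl⟩ := Ideal.mem_span_singleton'.1 hp
    have hq : q ∈ Submodule.span K (Set.range (pairBasis K)) := by
      rw [Module.Basis.span_eq]; trivial
    induction hq using Submodule.span_induction with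
    | mem x hx =>
      obtain ⟨⟨i, j⟩, rfl⟩ := hx
      have h : pairBasis K (i, j) * X 0 = X 0 ^ (i + 1) * X 1 ^ j := by
        rw [pairBasis_apply]; ring
      rw [h, h2 _ _ i.succ_pos, Ideal.mem_span_singleton]
      exact Dvd.dvd.mul_right (pow_dvd_pow _ (by omega)) _
    | zero => simp
    | add x y _ _ hx hy =>
      rw [add_mul, map_add]
      exact Ideal.add_mem _ (hx (Ideal.mem_span_singleton'.2 ⟨x, rfl⟩))
        (hy (Ideal.mem_span_singleton'.2 ⟨y, rfl⟩))
    | smul c x _ hx =>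
      rw [smul_mul_assoc, map_smul]
      exact Submodule.smul_of_tower_mem _ c (hx (Ideal.mem_span_singleton'.2 ⟨x, rfl⟩))
end

section
/- Let K be a field, R = K[Y,Z], U = {1,3,5,…}, f : U → {1,2,3,…} a bijection, and g = (g_1,g_2) : {2,4,6,…} → U × ℕ a bijection. Define σ : R → R as the K-linear map determined on monomials by σ(1) = 1, σ(Y^i Z^j) = Y^{2i} Z^j for i > 0, σ(Z^j) = Z^{f(j)} for j odd, and σ(Z^j) = Y^{g_1(j)} Z^{g_2(j)} for j even, j > 0, so that σ is an additive bijection of R with σ(1) = 1. Let J be the ideal of R generated by Y, let T = R[X;σ,0], and let I = { Σ_{i∈ℕ} r_i X^i ∈ T : r_i ∈ J for all i }. Then I is a left ideal of T which is not finitely generated as a left ideal; in particular, T is not left Noetherian even though R is Noetherian. -/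
/-!
Since `σ` doubles the `Y`-degree of every monomial divisible by `Y`, it maps `J = (Y)` into
`(Y²)` (`map_span_Y_le`). Hence, for each `N`, the polynomials in `I` whose coefficients beyond
`X^N` all lie in `(Y²)` form a left ideal `L_N` (`isLeftIdealSet_family`, `isLeftIdealSet_trunc`):
left multiplication by `r X^m` with `m > 0` raises the degree, but also pushes coefficients into
`(Y²)`. The `L_N` increase with union `I`, every finite subset of `I` lies in some `L_N`, and
`Y X^{N+1}` lies in `L_{N+1}` but not in `L_N`. This shows both that `I` is not finitely
generated and that the ascending chain condition fails.
-/

/-- A left ideal of a (possibly non-associative, non-unital) multiplication `mul` on an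
additive group `S`: an additive subgroup closed under left multiplication by arbitrary
elements of `S`. -/
def IsLeftIdealSet {S : Type*} [AddCommGroup S] (mul : S → S → S) (I : Set S) : Prop :=
  (0 : S) ∈ I ∧ (∀ a ∈ I, ∀ b ∈ I, a + b ∈ I) ∧ (∀ a ∈ I, -a ∈ I) ∧
    ∀ s : S, ∀ a ∈ I, mul s a ∈ I

/-- A right ideal of a (possibly non-associative, non-unital) multiplication `mul` on an
additive group `S`: an additive subgroup closed under right multiplication by arbitrary
elements of `S`. -/
def IsRightIdealSet {S : Type*} [AddCommGroup S] (mul : S → S → S) (I : Set S) : Prop :=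
  (0 : S) ∈ I ∧ (∀ a ∈ I, ∀ b ∈ I, a + b ∈ I) ∧ (∀ a ∈ I, -a ∈ I) ∧
    ∀ s : S, ∀ a ∈ I, mul a s ∈ I

/-- Left Noetherian: the ascending chain condition on left ideals. -/
def LeftNoetherianMul {S : Type*} [AddCommGroup S] (mul : S → S → S) : Prop :=
  ∀ f : ℕ → Set S, (∀ n, IsLeftIdealSet mul (f n)) → (∀ n, f n ⊆ f (n + 1)) →
    ∃ N, ∀ m, N ≤ m → f m = f N

/-- Right Noetherian: the ascending chain condition on right ideals. -/
def RightNoetherianMul {S : Type*} [AddCommGroup S] (mul : S → S → S) : Prop :=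
  ∀ f : ℕ → Set S, (∀ n, IsRightIdealSet mul (f n)) → (∀ n, f n ⊆ f (n + 1)) →
    ∃ N, ∀ m, N ≤ m → f m = f N

open MvPolynomial


/-- For `δ = 0` only the pure power of `σ` survives in `π_i^m`. -/
theorem piMap_zero_delta {R : Type*} [NonAssocRing R] (σ : R → R) (h0 : σ 0 = 0) (s : R) :
    ∀ m i : ℕ, piMap σ (fun _ => 0) m i s = if i = m then σ^[m] s else 0
  | 0, 0 => by simp [piMap]
  | 0, i + 1 => by simp [piMap]
  | m + 1, 0 => by simp [piMap]
  | m + 1, i + 1 => by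
    simp only [piMap, add_zero]
    rw [piMap_zero_delta σ h0 s m i]
    by_cases h : i = m
    · simp [h, Function.iterate_succ_apply']
    · simp [h, h0]

theorem oreMul_zero_delta {R : Type*} [NonAssocRing R] (σ : R → R) (h0 : σ 0 = 0)
    (p q : ℕ →₀ R) :
    oreMul σ (fun _ => 0) p q =
      p.sum fun m r => q.sum fun n s => Finsupp.single (m + n) (r * σ^[m] s) := by
  unfold oreMul
  congr 1
  funext m r
  congr 1
  funext n s
  rw [Finset.sum_eq_single m]
  · simp [piMap_zero_delta σ h0]
  · intro i _ hi
    simp [piMap_zero_delta σ h0, hi]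
  · simp

/-- Prescribing for each `i` an ideal `A i` containing the `i`-th coefficient gives a left ideal
of `R[X;σ,0]`, as soon as `σ` maps `A i` into `A (i + 1)`. -/
theorem isLeftIdealSet_family {R : Type*} [CommRing R] (σ : R → R) (h0 : σ 0 = 0)
    (A : ℕ → Ideal R) (hA : ∀ n, ∀ s ∈ A n, σ s ∈ A (n + 1)) :
    IsLeftIdealSet (oreMul σ (fun _ => 0)) { p : ℕ →₀ R | ∀ i, p i ∈ A i } := by
  have hit : ∀ m n, ∀ s ∈ A n, σ^[m] s ∈ A (m + n) := by
    intro m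
    induction m with
    | zero => intro n s hs; simpa using hs
    | succ m ih =>
      intro n s hs
      rw [Function.iterate_succ_apply', Nat.add_right_comm]
      exact hA _ _ (ih n s hs)
  refine ⟨fun i => (A i).zero_mem, fun a ha b hb i => (A i).add_mem (ha i) (hb i),
    fun a ha i => (A i).neg_mem (ha i), fun p q hq i => ?_⟩
  rw [oreMul_zero_delta σ h0, Finsupp.sum, Finsupp.finsetSum_apply]
  refine (A i).sum_mem fun m _ => ?_
  rw [Finsupp.sum, Finsupp.finsetSum_apply]
  refine (A i).sum_mem fun n _ => ?_
  rw [Finsupp.single_apply]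
  split_ifs with h
  · subst h
    exact (A _).mul_mem_left _ (hit m n _ (hq n))
  · exact (A i).zero_mem

theorem map_span_Y_le {K : Type*} [Field K]
    (σ : MvPolynomial (Fin 2) K →ₗ[K] MvPolynomial (Fin 2) K)
    (h2 : ∀ i j : ℕ, 0 < i →
      σ (X 0 ^ i * X 1 ^ j) = X 0 ^ (2 * i) * X 1 ^ j)
    (s : MvPolynomial (Fin 2) K)
    (hs : s ∈ Ideal.span {(X 0 : MvPolynomial (Fin 2) K)}) :
    σ s ∈ Ideal.span {(X 0 ^ 2 : MvPolynomial (Fin 2) K)} := by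
  obtain ⟨q, rfl⟩ := Ideal.mem_span_singleton.1 hs
  clear hs
  induction q using MvPolynomial.induction_on' with
  | monomial u a =>
    have e : (X 0 * monomial u a : MvPolynomial (Fin 2) K) =
        a • (X 0 ^ (u 0 + 1) * X 1 ^ (u 1)) := by
      rw [monomial_eq, Finsupp.prod_fintype _ _ (by simp), Fin.prod_univ_two, smul_eq_C_mul]
      ring
    rw [e, map_smul, h2 _ _ (Nat.succ_pos _), smul_eq_C_mul, Ideal.mem_span_singleton]
    refine Dvd.dvd.mul_left (Dvd.dvd.mul_right (pow_dvd_pow _ ?_) _) _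
    omega
  | add p q hp hq =>
    rw [mul_add, map_add]
    exact Ideal.add_mem _ hp hq

theorem Y_notMem_span_sq {K : Type*} [Field K] :
    (X 0 : MvPolynomial (Fin 2) K) ∉ Ideal.span {(X 0 ^ 2 : MvPolynomial (Fin 2) K)} := by
  rw [Ideal.mem_span_singleton]
  rintro ⟨c, hc⟩
  have := congrArg (coeff (Finsupp.single 0 1)) hc
  rw [coeff_X_same] at this
  -- `Y² c` has no monomial of total degree below two
  rw [X_pow_eq_monomial, coeff_monomial_mul', if_neg] at this
  · exact one_ne_zero this
  · intro h
    have := h 0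
    simp at this

/-- The ideal prescribed for the `i`-th coefficient of the members of the left ideal `L_N`:
`(Y)` for `i ≤ N` and `(Y²)` for `i > N`. -/
noncomputable def truncIdeal (K : Type*) [Field K] (N i : ℕ) : Ideal (MvPolynomial (Fin 2) K) :=
  if i ≤ N then Ideal.span {X 0} else Ideal.span {X 0 ^ 2}

theorem span_sq_le {K : Type*} [Field K] :
    Ideal.span {(X 0 ^ 2 : MvPolynomial (Fin 2) K)} ≤ Ideal.span {X 0} := by
  rw [Ideal.span_singleton_le_span_singleton]
  exact dvd_pow_self _ two_ne_zero

theorem truncIdeal_le {K : Type*} [Field K] (N i : ℕ) :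
    truncIdeal K N i ≤ Ideal.span {X 0} := by
  unfold truncIdeal
  split_ifs
  · exact le_rfl
  · exact span_sq_le

theorem span_sq_le_truncIdeal {K : Type*} [Field K] (N i : ℕ) :
    Ideal.span {X 0 ^ 2} ≤ truncIdeal K N i := by
  unfold truncIdeal
  split_ifs
  · exact span_sq_le
  · exact le_rfl

theorem isLeftIdealSet_trunc {K : Type*} [Field K]
    (σ : MvPolynomial (Fin 2) K →ₗ[K] MvPolynomial (Fin 2) K)
    (h2 : ∀ i j : ℕ, 0 < i →
      σ (X 0 ^ i * X 1 ^ j) = X 0 ^ (2 * i) * X 1 ^ j) (N : ℕ) :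
    IsLeftIdealSet (oreMul (⇑σ) (fun _ => 0))
      { p : ℕ →₀ MvPolynomial (Fin 2) K | ∀ i, p i ∈ truncIdeal K N i } :=
  isLeftIdealSet_family σ (map_zero σ) _ fun n s hs =>
    span_sq_le_truncIdeal N (n + 1) (map_span_Y_le σ h2 s (truncIdeal_le N n hs))

theorem single_notMem_trunc {K : Type*} [Field K] (N : ℕ) :
    ¬ ∀ i, (Finsupp.single (N + 1) (X 0 : MvPolynomial (Fin 2) K)) i ∈ truncIdeal K N i := by
  intro h
  have := h (N + 1)
  rw [Finsupp.single_eq_same, truncIdeal, if_neg (by omega)] at this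
  exact Y_notMem_span_sq this

/-- `Y X^n` lies in any coefficientwise family of ideals whose `n`-th member contains `Y`. -/
theorem single_mem_family {K : Type*} [Field K] (A : ℕ → Ideal (MvPolynomial (Fin 2) K)) (n : ℕ)
    (hA : X 0 ∈ A n) (i : ℕ) :
    (Finsupp.single n (X 0 : MvPolynomial (Fin 2) K)) i ∈ A i := by
  rw [Finsupp.single_apply]
  split_ifs with h
  · exact h ▸ hA
  · exact (A i).zero_mem

/-- **A counterexample to the left version of Hilbert's basis theorem for
non-associative Ore extensions.** Let `K` be a field, `R = K[Y,Z]` (with `Y = X 0`,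
`Z = X 1`), and `σ` the `K`-linear additive bijection of `R` determined on monomials by
`σ 1 = 1`, `σ (YⁱZʲ) = Y^{2i}Zʲ` for `i > 0`, `σ (Zʲ) = Z^{f j}` for `j` odd, and
`σ (Zʲ) = Y^{g₁ j} Z^{g₂ j}` for `j` even positive. Let `J` be the ideal of `R`
generated by `Y`, let `T = R[X;σ,0]`, and let
`I = { Σᵢ rᵢ Xⁱ ∈ T : rᵢ ∈ J for all i }`. Then `I` is a left ideal of `T` which is not
finitely generated as a left ideal; in particular `T` is not left Noetherian, even
though `R` is Noetherian. -/
theorem ore_not_leftNoetherian_counterexample {K : Type*} [Field K]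
    (f g1 g2 : ℕ → ℕ)
    (hf : Set.BijOn f { j : ℕ | Odd j } { j : ℕ | 0 < j })
    (hg : Set.BijOn (fun j => (g1 j, g2 j)) { j : ℕ | Even j ∧ 0 < j }
      ({ j : ℕ | Odd j } ×ˢ (Set.univ : Set ℕ)))
    (σ : MvPolynomial (Fin 2) K →ₗ[K] MvPolynomial (Fin 2) K)
    (h1 : σ 1 = 1)
    (h2 : ∀ i j : ℕ, 0 < i →
      σ (X 0 ^ i * X 1 ^ j) = X 0 ^ (2 * i) * X 1 ^ j)
    (h3 : ∀ j : ℕ, Odd j → σ (X 1 ^ j) = X 1 ^ f j)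
    (h4 : ∀ j : ℕ, Even j → 0 < j →
      σ (X 1 ^ j) = X 0 ^ g1 j * X 1 ^ g2 j) :
    IsLeftIdealSet (oreMul (⇑σ) (fun _ => 0))
      { p : ℕ →₀ MvPolynomial (Fin 2) K |
        ∀ i : ℕ, p i ∈ Ideal.span {(X 0 : MvPolynomial (Fin 2) K)} } ∧
    ¬ (∃ F : Finset (ℕ →₀ MvPolynomial (Fin 2) K),
        { p : ℕ →₀ MvPolynomial (Fin 2) K |
          ∀ i : ℕ, p i ∈ Ideal.span {(X 0 : MvPolynomial (Fin 2) K)} } =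
        ⋂₀ { L : Set (ℕ →₀ MvPolynomial (Fin 2) K) |
          IsLeftIdealSet (oreMul (⇑σ) (fun _ => 0)) L ∧ ↑F ⊆ L }) ∧
    ¬ LeftNoetherianMul (oreMul (⇑σ) (fun _ => 0)) ∧
    IsNoetherianRing (MvPolynomial (Fin 2) K) := by
  have hY : (X 0 : MvPolynomial (Fin 2) K) ∈ Ideal.span {(X 0 : MvPolynomial (Fin 2) K)} :=
    Ideal.mem_span_singleton_self _
  refine ⟨?_, ?_, ?_, inferInstance⟩
  · exact isLeftIdealSet_family σ (map_zero σ) (fun _ => Ideal.span {X 0}) fun n s hs =>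
      span_sq_le (map_span_Y_le σ h2 s hs)
  · rintro ⟨F, hF⟩
    have hFI : ∀ p ∈ F, ∀ i, p i ∈ Ideal.span {(X 0 : MvPolynomial (Fin 2) K)} := by
      intro p hp
      have : p ∈ ⋂₀ { L : Set (ℕ →₀ MvPolynomial (Fin 2) K) |
          IsLeftIdealSet (oreMul (⇑σ) (fun _ => 0)) L ∧ ↑F ⊆ L } := fun L hL => hL.2 hp
      rwa [← hF] at this
    -- a bound for the degrees in `X` of all the generators
    let N := F.sup fun p => p.support.sup id
    have hFN : (F : Set (ℕ →₀ MvPolynomial (Fin 2) K)) ⊆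
        { p | ∀ i, p i ∈ truncIdeal K N i } := by
      intro p hp i
      by_cases hi : i ∈ p.support
      · have h1 : i ≤ p.support.sup id := Finset.le_sup (f := id) hi
        have h2 : p.support.sup id ≤ N := Finset.le_sup (f := fun p => p.support.sup id) hp
        rw [truncIdeal, if_pos (h1.trans h2)]
        exact hFI p hp i
      · rw [Finsupp.notMem_support_iff.1 hi]
        exact Ideal.zero_mem _
    have hmem : Finsupp.single (N + 1) (X 0 : MvPolynomial (Fin 2) K) ∈
        { p : ℕ →₀ MvPolynomial (Fin 2) K |
          ∀ i : ℕ, p i ∈ Ideal.span {(X 0 : MvPolynomial (Fin 2) K)} } :=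
      single_mem_family (fun _ => Ideal.span {X 0}) (N + 1) hY
    rw [hF] at hmem
    exact single_notMem_trunc N (hmem _ ⟨isLeftIdealSet_trunc σ h2 N, hFN⟩)
  · intro hN
    obtain ⟨N, h⟩ := hN (fun N => { p | ∀ i, p i ∈ truncIdeal K N i })
      (isLeftIdealSet_trunc σ h2) (by
        intro N p hp i
        by_cases hi : i ≤ N + 1
        · rw [truncIdeal, if_pos hi]
          exact truncIdeal_le N i (hp i)
        · have := hp i
          rw [truncIdeal, if_neg (by omega)] at this
          rwa [truncIdeal, if_neg hi])
    have hmem : Finsupp.single (N + 1) (X 0 : MvPolynomial (Fin 2) K) ∈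
        { p : ℕ →₀ MvPolynomial (Fin 2) K | ∀ i, p i ∈ truncIdeal K (N + 1) i } :=
      single_mem_family _ (N + 1) (by rw [truncIdeal, if_pos le_rfl]; exact hY)
    have heq := h (N + 1) (Nat.le_succ N)
    exact single_notMem_trunc N (heq.subset hmem)
end

section
/- Let R be a unital associative ring and let σ : R → R be an additive surjection with σ(1) = 1. If R is right Noetherian, then the non-associative skew power series ring R[[X;σ]] is right Noetherian. -/
/-- The multiplication of the non-associative skew power series ring `R[[X;σ]]`, on the
additive group `ℕ → R` of formal power series `Σ rᵢ Xⁱ`: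
`(Σ r_m X^m)(Σ s_n X^n) = Σ_k (Σ_{m+n=k} r_m σ^m(s_n)) X^k`. -/
def skewPowerSeriesMul {R : Type*} [Ring R] (σ : R → R) (p q : ℕ → R) : ℕ → R :=
  fun k => ∑ m ∈ Finset.range (k + 1), p m * σ^[m] (q (k - m))

/-- The additive subgroup underlying a right ideal. -/
def rightIdealAddSubgroup {S : Type*} [AddCommGroup S] {mul : S → S → S} {I : Set S}
    (h : IsRightIdealSet mul I) : AddSubgroup S where
  carrier := I
  zero_mem' := h.1
  add_mem' := fun ha hb => h.2.1 _ ha _ hb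
  neg_mem' := fun ha => h.2.2.1 _ ha

theorem mem_rightIdealAddSubgroup {S : Type*} [AddCommGroup S] {mul : S → S → S} {I : Set S}
    (h : IsRightIdealSet mul I) {a : S} : a ∈ rightIdealAddSubgroup h ↔ a ∈ I := Iff.rfl

section Iterates

variable {R : Type*} [Ring R] {σ : R → R}

theorem iterate_map_add' (hσ : ∀ a b : R, σ (a + b) = σ a + σ b) (m : ℕ) (a b : R) :
    σ^[m] (a + b) = σ^[m] a + σ^[m] b :=
  iterate_map_add (AddMonoidHom.mk' σ hσ) m a b

theorem iterate_map_zero' (hσ : ∀ a b : R, σ (a + b) = σ a + σ b) (m : ℕ) :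
    σ^[m] 0 = 0 :=
  iterate_map_zero (AddMonoidHom.mk' σ hσ) m

theorem skewPowerSeriesMul_add (hσ : ∀ a b : R, σ (a + b) = σ a + σ b) (p q q' : ℕ → R) :
    skewPowerSeriesMul σ p (q + q') = skewPowerSeriesMul σ p q + skewPowerSeriesMul σ p q' := by
  funext k
  simp [skewPowerSeriesMul, iterate_map_add' hσ, mul_add, Finset.sum_add_distrib]

theorem skewPowerSeriesMul_zero (hσ : ∀ a b : R, σ (a + b) = σ a + σ b) (p : ℕ → R) :
    skewPowerSeriesMul σ p 0 = 0 := by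
  funext k
  simp [skewPowerSeriesMul, iterate_map_zero' hσ]

/-- If `p` has order at least `N`, the coefficient of `p * q` at `N + i` only involves the
coefficients of `q` up to `i`. -/
theorem skewPowerSeriesMul_congr {p q q' : ℕ → R} {N i : ℕ} (hp : ∀ k < N, p k = 0)
    (hq : ∀ k ≤ i, q k = q' k) :
    skewPowerSeriesMul σ p q (N + i) = skewPowerSeriesMul σ p q' (N + i) := by
  refine Finset.sum_congr rfl fun m _ => ?_
  by_cases h : m < N
  · simp [hp m h]
  · rw [hq _ (by omega)]

theorem skewPowerSeriesMul_eq_zero (hσ : ∀ a b : R, σ (a + b) = σ a + σ b) {p q : ℕ → R}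
    {N i : ℕ} (hp : ∀ k < N, p k = 0) (hq : ∀ k < i, q k = 0) {k : ℕ} (hk : k < N + i) :
    skewPowerSeriesMul σ p q k = 0 := by
  refine Finset.sum_eq_zero fun m hm => ?_
  rw [Finset.mem_range] at hm
  by_cases h : m < N
  · simp [hp m h]
  · rw [hq _ (by omega), iterate_map_zero' hσ, mul_zero]

theorem skewPowerSeriesMul_lead (hσ : ∀ a b : R, σ (a + b) = σ a + σ b) {p q : ℕ → R}
    {N i : ℕ} (hp : ∀ k < N, p k = 0) (hq : ∀ k < i, q k = 0) :
    skewPowerSeriesMul σ p q (N + i) = p N * σ^[N] (q i) := by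
  unfold skewPowerSeriesMul
  rw [Finset.sum_eq_single N]
  · simp
  · intro m hm hmN
    rw [Finset.mem_range] at hm
    by_cases h : m < N
    · simp [hp m h]
    · rw [hq _ (by omega), iterate_map_zero' hσ, mul_zero]
  · intro h
    simp only [Finset.mem_range] at h
    omega

/-- The right ideal of `m`-th coefficients of the elements of order at least `m` of a right ideal
`I` of `R[[X;σ]]`. Right ideals of `R` are encoded as `Rᵐᵒᵖ`-submodules. -/
def leadIdeal (hσ : ∀ a b : R, σ (a + b) = σ a + σ b) (hs : Function.Surjective σ) (m : ℕ)
    {I : Set (ℕ → R)} (hI : IsRightIdealSet (skewPowerSeriesMul σ) I) : Submodule Rᵐᵒᵖ R where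
  carrier := {a | ∃ p ∈ I, (∀ k < m, p k = 0) ∧ p m = a}
  zero_mem' := ⟨0, hI.1, fun _ _ => rfl, rfl⟩
  add_mem' := by
    rintro a b ⟨p, hp, hp0, rfl⟩ ⟨q, hq, hq0, rfl⟩
    exact ⟨p + q, hI.2.1 _ hp _ hq, fun k hk => by simp [hp0 k hk, hq0 k hk], rfl⟩
  smul_mem' := by
    rintro c a ⟨p, hp, hp0, rfl⟩
    obtain ⟨t, ht⟩ := hs.iterate m c.unop
    refine ⟨skewPowerSeriesMul σ p (Pi.single 0 t), hI.2.2.2 _ _ hp, fun k hk =>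
      skewPowerSeriesMul_eq_zero hσ hp0 (i := 0) (by simp) (by simpa using hk), ?_⟩
    have := skewPowerSeriesMul_lead hσ hp0 (q := Pi.single 0 t) (i := 0) (by simp)
    simpa [ht] using this

theorem mem_leadIdeal (hσ : ∀ a b : R, σ (a + b) = σ a + σ b) (hs : Function.Surjective σ)
    {m : ℕ} {I : Set (ℕ → R)} (hI : IsRightIdealSet (skewPowerSeriesMul σ) I) {a : R} :
    a ∈ leadIdeal hσ hs m hI ↔ ∃ p ∈ I, (∀ k < m, p k = 0) ∧ p m = a := Iff.rfl

/-- Multiplying by `X ^ (m' - m)` on the right shows that the leading ideals increase. -/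
theorem leadIdeal_mono (hσ : ∀ a b : R, σ (a + b) = σ a + σ b) (hs : Function.Surjective σ)
    (h1 : σ 1 = 1) {m m' : ℕ} (hm : m ≤ m') {I J : Set (ℕ → R)}
    (hI : IsRightIdealSet (skewPowerSeriesMul σ) I)
    (hJ : IsRightIdealSet (skewPowerSeriesMul σ) J) (hIJ : I ⊆ J) :
    leadIdeal hσ hs m hI ≤ leadIdeal hσ hs m' hJ := by
  rintro a ⟨p, hp, hp0, rfl⟩
  obtain ⟨i, rfl⟩ := Nat.exists_eq_add_of_le hm
  have hX : ∀ k < i, (Pi.single i 1 : ℕ → R) k = 0 := fun k hk => by simp [hk.ne]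
  refine ⟨skewPowerSeriesMul σ p (Pi.single i 1), hJ.2.2.2 _ _ (hIJ hp), fun k hk =>
    skewPowerSeriesMul_eq_zero hσ hp0 hX hk, ?_⟩
  rw [skewPowerSeriesMul_lead hσ hp0 hX]
  simp [Function.iterate_fixed h1]

/-- Elements of `K` of order at least `d` are combinations `∑ j, f j * q j`, where the `f j ∈ J`
have order at least `d` and their `d`-th coefficients generate `leadIdeal d J`. -/
theorem mem_of_order_ge [IsNoetherian Rᵐᵒᵖ R] (hσ : ∀ a b : R, σ (a + b) = σ a + σ b)
    (hs : Function.Surjective σ) {J K : Set (ℕ → R)}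
    (hJ : IsRightIdealSet (skewPowerSeriesMul σ) J)
    (hK : IsRightIdealSet (skewPowerSeriesMul σ) K) (hJK : J ⊆ K) {d : ℕ}
    (hL : ∀ m, d ≤ m → leadIdeal hσ hs m hK ≤ leadIdeal hσ hs d hJ)
    {p : ℕ → R} (hp : p ∈ K) (hp0 : ∀ k < d, p k = 0) : p ∈ J := by
  obtain ⟨n, a, ha⟩ := Submodule.fg_iff_exists_fin_generating_family.1
    (IsNoetherian.noetherian (leadIdeal hσ hs d hJ))
  have hf : ∀ j, ∃ f ∈ J, (∀ k < d, f k = 0) ∧ f d = a j := fun j =>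
    (mem_leadIdeal hσ hs hJ).1 (ha ▸ Submodule.subset_span ⟨j, rfl⟩)
  choose f hfJ hf0 hfa using hf
  -- One step of the division: the coefficient of `r` at `d + i` can be cancelled.
  have step : ∀ (i : ℕ) (r : ℕ → R), ∃ c : Fin n → R, r ∈ K → (∀ k < d + i, r k = 0) →
      ∀ k < d + (i + 1),
        (r - ∑ j, skewPowerSeriesMul σ (f j) (Pi.single i (c j))) k = 0 := by
    intro i r
    by_cases hr : r ∈ K ∧ ∀ k < d + i, r k = 0
    · have hmem : r (d + i) ∈ Submodule.span Rᵐᵒᵖ (Set.range a) :=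
        ha ▸ hL (d + i) (by omega) ⟨r, hr.1, hr.2, rfl⟩
      obtain ⟨b, hb⟩ := (Submodule.mem_span_range_iff_exists_fun _).1 hmem
      choose c hc using fun j => hs.iterate d (b j).unop
      refine ⟨c, fun _ _ k hk => ?_⟩
      have hX : ∀ j, ∀ k < i, (Pi.single i (c j) : ℕ → R) k = 0 :=
        fun j k hk => by simp [hk.ne]
      simp only [Pi.sub_apply, Finset.sum_apply]
      rcases Nat.lt_or_ge k (d + i) with h | h
      · rw [hr.2 k h, Finset.sum_eq_zero fun j _ =>
          skewPowerSeriesMul_eq_zero hσ (hf0 j) (hX j) h, sub_zero]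
      · obtain rfl : k = d + i := by omega
        rw [← hb, sub_eq_zero]
        refine Finset.sum_congr rfl fun j _ => ?_
        rw [skewPowerSeriesMul_lead hσ (hf0 j) (hX j), hfa]
        simp [hc]
    · exact ⟨0, fun h h' => (hr ⟨h, h'⟩).elim⟩
  choose c hc using step
  obtain ⟨r, hr_zero, hr_succ⟩ : ∃ r : ℕ → ℕ → R, r 0 = p ∧ ∀ i, r (i + 1) =
      r i - ∑ j, skewPowerSeriesMul σ (f j) (Pi.single i (c i (r i) j)) :=
    ⟨fun i => Nat.rec p
      (fun i r => r - ∑ j, skewPowerSeriesMul σ (f j) (Pi.single i (c i r j))) i,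
      rfl, fun _ => rfl⟩
  have hr : ∀ i, r i ∈ K ∧ ∀ k < d + i, r i k = 0 := by
    intro i
    induction i with
    | zero => exact hr_zero ▸ ⟨hp, hp0⟩
    | succ i ih =>
      refine ⟨?_, hr_succ i ▸ hc i (r i) ih.1 ih.2⟩
      rw [hr_succ, ← mem_rightIdealAddSubgroup hK]
      exact sub_mem ih.1 (sum_mem fun j _ => hK.2.2.2 _ _ (hJK (hfJ j)))
  let q : Fin n → ℕ → R := fun j t => c t (r t) j
  -- The `i`-th remainder comes from the truncations of the `q j` below degree `i`.
  have hrq : ∀ i, r i = p - ∑ j, skewPowerSeriesMul σ (f j)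
      (fun t => if t < i then q j t else 0) := by
    intro i
    induction i with
    | zero =>
      have : ∀ j, skewPowerSeriesMul σ (f j) (fun t => if t < 0 then q j t else 0) = 0 :=
        fun j => by simpa using! skewPowerSeriesMul_zero hσ (f j)
      rw [Finset.sum_eq_zero fun j _ => this j, sub_zero, hr_zero]
    | succ i ih =>
      have htr : ∀ j, (fun t => if t < i + 1 then q j t else 0) =
          (fun t => if t < i then q j t else 0) + Pi.single i (q j i) := by
        intro j
        funext t
        rcases lt_trichotomy t i with h | rfl | h
        · simp [h, h.ne, Nat.lt_succ_of_lt h]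
        · simp
        · simp [h.ne', not_lt.2 h.le, show ¬ t < i + 1 by omega]
      simp only [htr, skewPowerSeriesMul_add hσ]
      rw [Finset.sum_add_distrib, ← sub_sub, ← ih, hr_succ]
  have hpq : p = ∑ j, skewPowerSeriesMul σ (f j) (q j) := by
    funext k
    rw [Finset.sum_apply]
    rcases Nat.lt_or_ge k d with h | h
    · rw [hp0 k h, Finset.sum_eq_zero fun j _ =>
        skewPowerSeriesMul_eq_zero hσ (hf0 j) (i := 0) (by simp) h]
    · obtain ⟨i, rfl⟩ := Nat.exists_eq_add_of_le h
      have h0 := (hr (i + 1)).2 (d + i) (by omega)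
      rw [hrq, Pi.sub_apply, sub_eq_zero, Finset.sum_apply] at h0
      rw [h0]
      refine Finset.sum_congr rfl fun j _ => skewPowerSeriesMul_congr (hf0 j) fun t ht => ?_
      simp [Nat.lt_succ_of_le ht]
  rw [hpq, ← mem_rightIdealAddSubgroup hJ]
  exact sum_mem fun j _ => hJ.2.2.2 _ _ (hfJ j)

theorem subset_of_leadIdeal_le [IsNoetherian Rᵐᵒᵖ R] (hσ : ∀ a b : R, σ (a + b) = σ a + σ b)
    (hs : Function.Surjective σ) {J K : Set (ℕ → R)}
    (hJ : IsRightIdealSet (skewPowerSeriesMul σ) J)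
    (hK : IsRightIdealSet (skewPowerSeriesMul σ) K) (hJK : J ⊆ K) {d : ℕ}
    (hL : ∀ m, d ≤ m → leadIdeal hσ hs m hK ≤ leadIdeal hσ hs d hJ)
    (hlow : ∀ m < d, leadIdeal hσ hs m hK ≤ leadIdeal hσ hs m hJ) : K ⊆ J := by
  have key : ∀ i ≤ d, ∀ p ∈ K, (∀ k < d - i, p k = 0) → p ∈ J := by
    intro i
    induction i with
    | zero => exact fun _ p hp hp0 => mem_of_order_ge hσ hs hJ hK hJK hL hp hp0
    | succ i ih =>
      intro hi p hp hp0
      obtain ⟨g, hg, hg0, hgp⟩ := hlow (d - (i + 1)) (by omega) ⟨p, hp, hp0, rfl⟩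
      have hpg : p - g ∈ J := by
        refine ih (by omega) _ (sub_mem (H := rightIdealAddSubgroup hK)
          hp (hJK hg)) fun k hk => ?_
        rcases Nat.lt_or_ge k (d - (i + 1)) with h | h
        · simp [hp0 k h, hg0 k h]
        · obtain rfl : k = d - (i + 1) := by omega
          simp [hgp]
      simpa using hJ.2.1 _ hpg _ hg
  exact fun p hp => key d le_rfl p hp (by simp)

end Iterates

theorem isNoetherian_op_of_rightNoetherianMul {R : Type*} [Ring R]
    (hR : RightNoetherianMul (fun a b : R => a * b)) : IsNoetherian Rᵐᵒᵖ R := by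
  rw [← monotone_stabilizes_iff_noetherian]
  intro f
  obtain ⟨N, hN⟩ := hR (fun n => (f n : Set R))
    (fun n => ⟨(f n).zero_mem, fun a ha b hb => (f n).add_mem ha hb,
      fun a ha => (f n).neg_mem ha, fun s a ha => (f n).smul_mem (MulOpposite.op s) ha⟩)
    (fun n => f.mono n.le_succ)
  exact ⟨N, fun m hm => SetLike.coe_injective (hN m hm).symm⟩

/-- **Hilbert's basis theorem for non-associative skew power series rings.** If `R` is a
unital associative ring, `σ` an additive surjection of `R` with `σ 1 = 1`, and `R` is
right Noetherian, then `R[[X;σ]]` is right Noetherian. -/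
theorem skewPowerSeries_rightNoetherian {R : Type*} [Ring R] (σ : R → R)
    (hσadd : ∀ a b : R, σ (a + b) = σ a + σ b) (hσsurj : Function.Surjective σ)
    (hσ1 : σ 1 = 1) (hR : RightNoetherianMul (fun a b : R => a * b)) :
    RightNoetherianMul (skewPowerSeriesMul σ) := by
  have := isNoetherian_op_of_rightNoetherianMul hR
  intro f hf hmono
  have hfm : Monotone f := monotone_nat_of_le_succ hmono
  obtain ⟨d, hd⟩ := monotone_stabilizes_iff_noetherian.2 this
    ⟨fun n => leadIdeal hσadd hσsurj n (hf n),
      fun a b hab => leadIdeal_mono hσadd hσsurj hσ1 hab _ _ (hfm hab)⟩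
  have hrow : ∀ m, ∃ N, ∀ n, N ≤ n →
      leadIdeal hσadd hσsurj m (hf N) = leadIdeal hσadd hσsurj m (hf n) := fun m =>
    monotone_stabilizes_iff_noetherian.2 this
      ⟨fun n => leadIdeal hσadd hσsurj m (hf n),
        fun a b hab => leadIdeal_mono hσadd hσsurj hσ1 le_rfl _ _ (hfm hab)⟩
  choose M hM using hrow
  let N := max d ((Finset.range d).sup M)
  refine ⟨N, fun n hn => Set.Subset.antisymm ?_ (hfm hn)⟩
  refine subset_of_leadIdeal_le hσadd hσsurj (hf N) (hf n) (hfm hn) (d := d) ?_ ?_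
  · intro m hm
    calc leadIdeal hσadd hσsurj m (hf n)
        ≤ leadIdeal hσadd hσsurj (max m n) (hf (max m n)) :=
          leadIdeal_mono hσadd hσsurj hσ1 (le_max_left _ _) _ _ (hfm (le_max_right _ _))
      _ = leadIdeal hσadd hσsurj d (hf d) := (hd _ (hm.trans (le_max_left _ _))).symm
      _ ≤ leadIdeal hσadd hσsurj d (hf N) :=
          leadIdeal_mono hσadd hσsurj hσ1 le_rfl _ _ (hfm (le_max_left _ _))
  · intro m hm
    have hMN : M m ≤ N :=
      (Finset.le_sup (f := M) (Finset.mem_range.2 hm)).trans (le_max_right _ _)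
    rw [← hM m n (hMN.trans hn), ← hM m N hMN]
end

section
/- Let R be a unital non-associative ring and σ, δ : R → R additive maps with σ(1) = 1 and δ(1) = 0. The non-associative Ore extension R[X;σ,δ] is associative if and only if R is associative, σ is a ring endomorphism of R, and δ is a σ-derivation of R. -/
namespace OreAssoc

variable {R : Type*} [NonAssocRing R]

/-- Left multiplication of the coefficients by `a`; over a non-associative `R` this is only
additive, not a module structure. -/
noncomputable def coeffMul (a : R) : (ℕ →₀ R) →+ (ℕ →₀ R) :=
  Finsupp.mapRange.addMonoidHom (AddMonoidHom.mulLeft a)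

@[simp] lemma coeffMul_single (a s : R) (n : ℕ) :
    coeffMul a (Finsupp.single n s) = Finsupp.single n (a * s) := by
  simp [coeffMul]

lemma coeffMul_add (a b : R) : coeffMul (a + b) = coeffMul a + coeffMul b := by
  refine Finsupp.addHom_ext fun n s => ?_
  simp [-Finsupp.single_mul, add_mul]

/-- Left multiplication by the indeterminate: `s X^n ↦ σ(s) X^(n+1) + δ(s) X^n`. -/
noncomputable def shift (σ δ : R →+ R) : (ℕ →₀ R) →+ (ℕ →₀ R) :=
  Finsupp.liftAddHom fun n =>
    (Finsupp.singleAddHom (n + 1)).comp σ + (Finsupp.singleAddHom n).comp δ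

@[simp] lemma shift_single (σ δ : R →+ R) (n : ℕ) (s : R) :
    shift σ δ (Finsupp.single n s) = Finsupp.single (n + 1) (σ s) + Finsupp.single n (δ s) := by
  rw [shift, Finsupp.liftAddHom_apply_single]
  rfl

/-- The powers `T^m` of left multiplication by the indeterminate. -/
noncomputable def shiftPow (σ δ : R →+ R) : ℕ → (ℕ →₀ R) →+ (ℕ →₀ R)
  | 0 => AddMonoidHom.id _
  | m + 1 => (shift σ δ).comp (shiftPow σ δ m)

@[simp] lemma shiftPow_zero (σ δ : R →+ R) (q : ℕ →₀ R) : shiftPow σ δ 0 q = q := rfl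

@[simp] lemma shiftPow_succ (σ δ : R →+ R) (m : ℕ) (q : ℕ →₀ R) :
    shiftPow σ δ (m + 1) q = shift σ δ (shiftPow σ δ m q) := rfl

lemma piMap_eq_zero (σ δ : R →+ R) (s : R) : ∀ m i : ℕ, m < i → piMap σ δ m i s = 0
  | 0, _ + 1, _ => rfl
  | m + 1, i + 1, h => by
    simp [piMap, piMap_eq_zero σ δ s m i (by omega),
      piMap_eq_zero σ δ s m (i + 1) (by omega)]

lemma shiftPow_single (σ δ : R →+ R) (m n : ℕ) (s : R) :
    shiftPow σ δ m (Finsupp.single n s) =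
      ∑ i ∈ Finset.range (m + 1), Finsupp.single (i + n) (piMap σ δ m i s) := by
  induction m with
  | zero => simp [piMap]
  | succ m ih =>
    rw [shiftPow_succ, ih, map_sum]
    simp only [shift_single, Finset.sum_add_distrib]
    rw [Finset.sum_range_succ' _ (m + 1)]
    simp only [piMap, Finsupp.single_add, Finset.sum_add_distrib, add_right_comm _ 1 n]
    rw [add_assoc]
    congr 1
    -- The term `i = m + 1` of the `δ`-part vanishes, so that sum may be extended by it.
    have h := Finset.sum_range_succ' (fun i => Finsupp.single (i + n) (δ (piMap σ δ m i s))) (m + 1)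
    rw [Finset.sum_range_succ, piMap_eq_zero σ δ s m (m + 1) (by omega)] at h
    simpa [add_right_comm _ 1 n] using h

/-- Left multiplication in the Ore extension, `L (r X^m) = r • T^m`, as a biadditive map. -/
noncomputable def leftMul (σ δ : R →+ R) : (ℕ →₀ R) →+ (ℕ →₀ R) →+ (ℕ →₀ R) :=
  Finsupp.liftAddHom fun m =>
    AddMonoidHom.mk' (fun r => (coeffMul r).comp (shiftPow σ δ m)) fun a b => by
      refine AddMonoidHom.ext fun q => ?_
      simp [coeffMul_add]

@[simp] lemma leftMul_single (σ δ : R →+ R) (m : ℕ) (r : R) (q : ℕ →₀ R) :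
    leftMul σ δ (Finsupp.single m r) q = coeffMul r (shiftPow σ δ m q) := by
  rw [leftMul, Finsupp.liftAddHom_apply_single]
  rfl

lemma oreMul_eq_leftMul (σ δ : R →+ R) (p q : ℕ →₀ R) :
    oreMul σ δ p q = leftMul σ δ p q := by
  conv_rhs => rw [← Finsupp.sum_single p, ← Finsupp.sum_single q]
  simp only [oreMul, Finsupp.sum, map_sum, AddMonoidHom.finsetSum_apply, leftMul_single,
    shiftPow_single, coeffMul_single]
  rw [Finset.sum_comm]

/-- The commutation rule `X a = σ(a) X + δ(a)`, acting on polynomials. -/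
lemma shift_coeffMul {σ δ : R →+ R} (hσ : ∀ a b : R, σ (a * b) = σ a * σ b)
    (hδ : ∀ a b : R, δ (a * b) = σ a * δ b + δ a * b) (a : R) (q : ℕ →₀ R) :
    shift σ δ (coeffMul a q) = coeffMul (σ a) (shift σ δ q) + coeffMul (δ a) q := by
  induction q using Finsupp.induction_linear with
  | zero => simp
  | add f g hf hg => simp only [map_add, hf, hg]; abel
  | single n s => simp [-Finsupp.single_mul, hσ, hδ, Finsupp.single_add, add_assoc]

lemma coeffMul_mul (ha : ∀ a b c : R, a * b * c = a * (b * c)) (a b : R) (q : ℕ →₀ R) :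
    coeffMul (a * b) q = coeffMul a (coeffMul b q) := by
  induction q using Finsupp.induction_linear with
  | zero => simp
  | add f g hf hg => simp only [map_add, hf, hg]
  | single n s => simp [-Finsupp.single_mul, ha]

lemma leftMul_coeffMul (σ δ : R →+ R) (ha : ∀ a b c : R, a * b * c = a * (b * c))
    (a : R) (q r : ℕ →₀ R) :
    leftMul σ δ (coeffMul a q) r = coeffMul a (leftMul σ δ q r) := by
  induction q using Finsupp.induction_linear with
  | zero => simp
  | add f g hf hg => simp only [map_add, AddMonoidHom.add_apply, hf, hg]
  | single n s => simp [-Finsupp.single_mul, coeffMul_mul ha]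

lemma leftMul_shift {σ δ : R →+ R} (hσ : ∀ a b : R, σ (a * b) = σ a * σ b)
    (hδ : ∀ a b : R, δ (a * b) = σ a * δ b + δ a * b) (q r : ℕ →₀ R) :
    leftMul σ δ (shift σ δ q) r = shift σ δ (leftMul σ δ q r) := by
  induction q using Finsupp.induction_linear with
  | zero => simp
  | add f g hf hg => simp only [map_add, AddMonoidHom.add_apply, hf, hg]
  | single n s =>
    simp [-Finsupp.single_mul, shift_coeffMul hσ hδ, shiftPow_succ]

lemma leftMul_shift_pow {σ δ : R →+ R} (hσ : ∀ a b : R, σ (a * b) = σ a * σ b)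
    (hδ : ∀ a b : R, δ (a * b) = σ a * δ b + δ a * b) (m : ℕ) (q r : ℕ →₀ R) :
    leftMul σ δ (shiftPow σ δ m q) r = shiftPow σ δ m (leftMul σ δ q r) := by
  induction m with
  | zero => simp
  | succ m ih => simp only [shiftPow_succ, leftMul_shift hσ hδ, ih]

lemma leftMul_assoc {σ δ : R →+ R} (ha : ∀ a b c : R, a * b * c = a * (b * c))
    (hσ : ∀ a b : R, σ (a * b) = σ a * σ b)
    (hδ : ∀ a b : R, δ (a * b) = σ a * δ b + δ a * b) (p q r : ℕ →₀ R) :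
    leftMul σ δ (leftMul σ δ p q) r = leftMul σ δ p (leftMul σ δ q r) := by
  induction p using Finsupp.induction_linear with
  | zero => simp
  | add f g hf hg => simp only [map_add, AddMonoidHom.add_apply, hf, hg]
  | single n s => simp only [leftMul_single, leftMul_coeffMul σ δ ha, leftMul_shift_pow hσ hδ]

/-- The equivalence for additive maps bundled as homomorphisms. -/
lemma associative_iff (σ δ : R →+ R) :
    (∀ p q r : ℕ →₀ R,
        oreMul σ δ (oreMul σ δ p q) r = oreMul σ δ p (oreMul σ δ q r)) ↔
      ((∀ a b c : R, a * b * c = a * (b * c)) ∧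
        (∀ a b : R, σ (a * b) = σ a * σ b) ∧
        ∀ a b : R, δ (a * b) = σ a * δ b + δ a * b) := by
  simp only [oreMul_eq_leftMul]
  refine ⟨fun h => ?_, fun ⟨ha, hσ, hδ⟩ => leftMul_assoc ha hσ hδ⟩
  -- `(X a) b = X (a b)`, expanded in the monomials `X` and `1`.
  have hX : ∀ a b : R,
      Finsupp.single 1 (σ a * σ b) + Finsupp.single 0 (σ a * δ b) + Finsupp.single 0 (δ a * b) =
        Finsupp.single 1 (σ (a * b)) + Finsupp.single 0 (δ (a * b)) := fun a b => by
    simpa [-Finsupp.single_mul, coeffMul_add] using h (Finsupp.single 1 1) (Finsupp.single 0 a) (Finsupp.single 0 b)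
  refine ⟨fun a b c => ?_, fun a b => ?_, fun a b => ?_⟩
  · have h0 := h (Finsupp.single 0 a) (Finsupp.single 0 b) (Finsupp.single 0 c)
    simpa [-Finsupp.single_mul] using DFunLike.congr_fun h0 0
  · simpa using (DFunLike.congr_fun (hX a b) 1).symm
  · simpa using (DFunLike.congr_fun (hX a b) 0).symm

end OreAssoc

/-- The non-associative Ore extension `R[X;σ,δ]` is associative if and only if `R` is
associative, `σ` is a ring endomorphism of `R` (`σ` being already additive with
`σ 1 = 1`, this amounts to `σ` preserving multiplication), and `δ` is a `σ`-derivation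
of `R`. -/
theorem ore_associative_iff {R : Type*} [NonAssocRing R] (σ δ : R → R)
    (hσadd : ∀ a b : R, σ (a + b) = σ a + σ b) (hσ1 : σ 1 = 1)
    (hδadd : ∀ a b : R, δ (a + b) = δ a + δ b) (hδ1 : δ 1 = 0) :
    (∀ p q r : ℕ →₀ R,
        oreMul σ δ (oreMul σ δ p q) r = oreMul σ δ p (oreMul σ δ q r)) ↔
      ((∀ a b c : R, a * b * c = a * (b * c)) ∧
        (∀ a b : R, σ (a * b) = σ a * σ b) ∧
        ∀ a b : R, δ (a * b) = σ a * δ b + δ a * b) := by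
  exact OreAssoc.associative_iff (AddMonoidHom.mk' σ hσadd) (AddMonoidHom.mk' δ hδadd)
end

section
/- Let R be a unital non-associative ring and σ, δ : R → R additive maps with σ(1) = 1 and δ(1) = 0. For every n ∈ ℕ, the element X^n of S = R[X;σ,δ] lies in N_m(S) ∩ N_r(S), i.e. (p X^n) q = p (X^n q) and (p q) X^n = p (q X^n) for all p, q ∈ S. -/
section Helpers

open Finsupp

variable {R : Type*} [NonAssocRing R]

/-- Left multiplication by `X`: the additive map `s Xᵏ ↦ σ(s) X^{k+1} + δ(s) Xᵏ`. -/
noncomputable def oreShift (σ δ : R →+ R) : (ℕ →₀ R) →+ (ℕ →₀ R) :=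
  liftAddHom fun k => (singleAddHom (k + 1)).comp σ + (singleAddHom k).comp δ

/-- Coefficientwise left multiplication by `r`. -/
noncomputable def coeffMul (r : R) : (ℕ →₀ R) →+ (ℕ →₀ R) :=
  mapRange.addMonoidHom (AddMonoidHom.mulLeft r)

/-- The exponent shift `s Xᵏ ↦ s X^{k+n}`. -/
noncomputable def expShift (n : ℕ) : (ℕ →₀ R) →+ (ℕ →₀ R) :=
  mapDomain.addMonoidHom (· + n)

lemma oreShift_single (σ δ : R →+ R) (k : ℕ) (s : R) :
    oreShift σ δ (single k s) = single (k + 1) (σ s) + single k (δ s) := by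
  simp [oreShift]

lemma coeffMul_single (r : R) (k : ℕ) (s : R) :
    coeffMul r (single k s) = single k (r * s) := by
  simp [coeffMul]

lemma expShift_single (n k : ℕ) (s : R) :
    expShift n (single k s) = single (k + n) s := by
  simp [expShift, mapDomain_single]

lemma piMap_eq_zero (σ δ : R →+ R) (s : R) :
    ∀ m i : ℕ, m < i → piMap σ δ m i s = 0
  | 0, 0, h => absurd h (lt_irrefl _)
  | 0, _ + 1, _ => rfl
  | _ + 1, 0, h => absurd h (Nat.not_lt_zero _)
  | m + 1, i + 1, h => by
    simp [piMap, piMap_eq_zero σ δ s m i (by omega), piMap_eq_zero σ δ s m (i + 1) (by omega)]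

/-- The `π_i^m` are the coefficients of the `m`-th power of left multiplication by `X`. -/
lemma oreShift_iterate_single (σ δ : R →+ R) (m n : ℕ) (s : R) :
    (oreShift σ δ)^[m] (single n s) =
      ∑ i ∈ Finset.range (m + 1), single (i + n) (piMap σ δ m i s) := by
  induction m with
  | zero => simp [piMap]
  | succ m ih =>
    rw [Function.iterate_succ_apply', ih, map_sum, Finset.sum_range_succ' _ (m + 1)]
    simp only [oreShift_single, piMap, single_add, Finset.sum_add_distrib, add_assoc]
    congr 1
    · refine Finset.sum_congr rfl fun i _ => ?_
      rw [Nat.add_comm 1 n]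
    ·
      -- the `δ`-terms: the target also contains the term at `i = m + 1`, where `π_{m+1}^m = 0`
      rw [Finset.sum_range_succ', Finset.sum_range_succ _ m,
        piMap_eq_zero σ δ s m (m + 1) (Nat.lt_succ_self m)]
      simp [add_assoc]

/-- `T^m (Xⁿ) = X^{m+n}`; this is where `σ(1) = 1` and `δ(1) = 0` enter. -/
lemma oreShift_iterate_single_one (σ δ : R →+ R) (hσ : σ 1 = 1) (hδ : δ 1 = 0) (m n : ℕ) :
    (oreShift σ δ)^[m] (single n 1) = single (m + n) 1 := by
  induction m with
  | zero => simp
  | succ m ih =>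
    rw [Function.iterate_succ_apply', ih, oreShift_single, hσ, hδ, single_zero, add_zero,
      add_right_comm]

lemma oreMul_eq_sum (σ δ : R →+ R) (p q : ℕ →₀ R) :
    oreMul σ δ p q = p.sum fun m r => coeffMul r ((oreShift σ δ)^[m] q) := by
  unfold oreMul
  refine Finsupp.sum_congr fun m _ => ?_
  have h := map_finsuppSum (AddMonoidHom.mk' _ (iterate_map_add (oreShift σ δ) m)) q single
  simp only [sum_single, AddMonoidHom.mk'_apply] at h
  rw [h, map_finsuppSum]
  refine Finsupp.sum_congr fun n _ => ?_
  rw [oreShift_iterate_single, map_sum]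
  simp only [coeffMul_single]

lemma oreMul_single_one_left (σ δ : R →+ R) (n : ℕ) (q : ℕ →₀ R) :
    oreMul σ δ (single n 1) q = (oreShift σ δ)^[n] q := by
  have h1 : coeffMul (1 : R) = AddMonoidHom.id _ := by ext; simp [coeffMul]
  have h0 : coeffMul (0 : R) = 0 := by ext; simp [coeffMul]
  rw [oreMul_eq_sum, sum_single_index (by simp [h0]), h1, AddMonoidHom.id_apply]

lemma oreMul_single_one_right (σ δ : R →+ R) (hσ : σ 1 = 1) (hδ : δ 1 = 0) (n : ℕ)
    (p : ℕ →₀ R) : oreMul σ δ p (single n 1) = expShift n p := by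
  rw [oreMul_eq_sum]
  simp only [oreShift_iterate_single_one σ δ hσ hδ, coeffMul_single, mul_one]
  rfl

lemma expShift_coeffMul (n : ℕ) (r : R) (q : ℕ →₀ R) :
    expShift n (coeffMul r q) = coeffMul r (expShift n q) := by
  induction q using Finsupp.induction_linear with
  | zero => simp
  | add f g hf hg => simp only [map_add, hf, hg]
  | single k s => simp only [coeffMul_single, expShift_single]

lemma expShift_oreShift (σ δ : R →+ R) (n : ℕ) :
    Function.Commute (expShift n : (ℕ →₀ R) →+ (ℕ →₀ R)) (oreShift σ δ) := by
  intro q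
  induction q using Finsupp.induction_linear with
  | zero => simp
  | add f g hf hg => simp only [map_add, hf, hg]
  | single k s => simp only [oreShift_single, expShift_single, map_add, add_right_comm]

lemma oreMul_expShift_left (σ δ : R →+ R) (n : ℕ) (p q : ℕ →₀ R) :
    oreMul σ δ (expShift n p) q = oreMul σ δ p ((oreShift σ δ)^[n] q) := by
  rw [oreMul_eq_sum, oreMul_eq_sum]
  have := sum_mapDomain_index_inj (f := (· + n)) (s := p)
    (h := fun m r => coeffMul r ((oreShift σ δ)^[m] q)) (add_left_injective n)
  simp only [Function.iterate_add_apply] at this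
  exact this

lemma oreMul_expShift_right (σ δ : R →+ R) (n : ℕ) (p q : ℕ →₀ R) :
    oreMul σ δ p (expShift n q) = expShift n (oreMul σ δ p q) := by
  rw [oreMul_eq_sum, oreMul_eq_sum, map_finsuppSum]
  refine Finsupp.sum_congr fun m _ => ?_
  rw [expShift_coeffMul, (expShift_oreShift σ δ n).iterate_right m q]

end Helpers

/-- For every `n ∈ ℕ`, the element `Xⁿ` of `S = R[X;σ,δ]` lies in the middle and right
nuclei `N_m(S) ∩ N_r(S)`: `(p Xⁿ) q = p (Xⁿ q)` and `(p q) Xⁿ = p (q Xⁿ)` for all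
`p, q ∈ S`. -/
theorem ore_Xpow_mem_midRightNucleus {R : Type*} [NonAssocRing R] (σ δ : R → R)
    (hσadd : ∀ a b : R, σ (a + b) = σ a + σ b) (hσ1 : σ 1 = 1)
    (hδadd : ∀ a b : R, δ (a + b) = δ a + δ b) (hδ1 : δ 1 = 0) (n : ℕ) :
    (∀ p q : ℕ →₀ R,
        oreMul σ δ (oreMul σ δ p (Finsupp.single n (1 : R))) q =
          oreMul σ δ p (oreMul σ δ (Finsupp.single n (1 : R)) q)) ∧
    (∀ p q : ℕ →₀ R,
        oreMul σ δ (oreMul σ δ p q) (Finsupp.single n (1 : R)) =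
          oreMul σ δ p (oreMul σ δ q (Finsupp.single n (1 : R)))) := by
  obtain ⟨σ, rfl⟩ : ∃ f : R →+ R, σ = f := ⟨AddMonoidHom.mk' σ hσadd, rfl⟩
  obtain ⟨δ, rfl⟩ : ∃ f : R →+ R, δ = f := ⟨AddMonoidHom.mk' δ hδadd, rfl⟩
  simp only [oreMul_single_one_left, oreMul_single_one_right σ δ hσ1 hδ1]
  exact ⟨oreMul_expShift_left σ δ n, fun p q => (oreMul_expShift_right σ δ n p q).symm⟩
end
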